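/- arXiv:1806.06368 — 4 statements merged into one kernel-verified Lean document; each statement's English description precedes it below -/
import Mathlib

section
/- Let N ≥ 1, k ∈ ℕ, and let c : Fin (2k) → Bool be a coloring taking the value true exactly k times. For an N×N complex matrix g, let g_a = g if c(a) = true and g_a = ḡ (the entrywise complex conjugate of g) if c(a) = false, and let T_g denote the linear endomorphism of (ℂ^N)^{⊗2k} acting as g_a on the a-th tensor factor. If ξ ∈ (ℂ^N)^{⊗2k} satisfies T_g ξ = ξ for every g ∈ SU_N, then T_u ξ = ξ for every u ∈ U_N. -/
/-!
Every `u ∈ U_N` can be written `u = z • g` with `|z| = 1` and `g ∈ SU_N`: take `z` to be an `N`-th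
root of `det u`. Acting by `z • g` multiplies the action of `g` by `z` for each white leg and by
`conj z` for each black leg, hence by `z ^ k * conj z ^ k = 1` when the colouring is balanced.
-/

/-- Scalars `z` on each white leg and `w = z⁻¹` on each black leg contribute the total scalar `1` when
exactly half of the legs are white. -/
lemma prod_balanced {k : ℕ} (c : Fin (2 * k) → Bool)
    (hc : (Finset.univ.filter fun a => c a = true).card = k) {z w : ℂ} (hzw : z * w = 1) :
    ∏ a, (if c a then z else w) = 1 := by
  have hc' : (Finset.univ.filter fun a => ¬ c a = true).card = k := by
    have h := Finset.card_filter_add_card_filter_not (s := Finset.univ) (fun a => c a = true)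
    rw [hc, Finset.card_univ, Fintype.card_fin] at h
    omega
  rw [Finset.prod_ite, Finset.prod_const, Finset.prod_const, hc, hc', ← mul_pow, hzw, one_pow]

lemma exists_eq_smul_special {N : ℕ} (hN : 1 ≤ N) {u : Matrix (Fin N) (Fin N) ℂ}
    (hu : u ∈ Matrix.unitaryGroup (Fin N) ℂ) :
    ∃ (z : ℂ) (g : Matrix (Fin N) (Fin N) ℂ), z * starRingEnd ℂ z = 1 ∧
      g ∈ Matrix.unitaryGroup (Fin N) ℂ ∧ g.det = 1 ∧ u = z • g := by
  obtain ⟨z, hz⟩ := IsAlgClosed.exists_pow_nat_eq u.det (n := N) (by omega)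
  have hdet : ‖u.det‖ = 1 := by
    exact CStarRing.norm_of_mem_unitary (Matrix.det_of_mem_unitary hu)
  have hnorm : ‖z‖ = 1 := by
    rw [← hz, norm_pow] at hdet
    exact (pow_eq_one_iff_of_nonneg (norm_nonneg z) (by omega)).mp hdet
  have hzz : z * starRingEnd ℂ z = 1 := by
    rw [Complex.mul_conj', hnorm]; simp
  refine ⟨z, starRingEnd ℂ z • u, hzz, ?_, ?_, ?_⟩
  · rw [Matrix.mem_unitaryGroup_iff] at hu ⊢
    rw [star_smul, smul_mul_smul_comm, hu, starRingEnd_apply, star_star, mul_comm,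
      ← starRingEnd_apply, hzz, one_smul]
  · rw [Matrix.det_smul, Fintype.card_fin, ← hz, ← mul_pow, mul_comm, hzz, one_pow]
  · rw [smul_smul, hzz, one_smul]

/-- The 'balanced word' step in the proof of Proposition 3.3: if a vector of a
balanced (`k` white, `k` black legs) tensor power of `ℂ^N` is fixed by all
`g ∈ SU_N` (acting as `g` on white legs and as `ḡ` on black legs), then it is
fixed by all `u ∈ U_N`. -/
theorem stmt_3 (N k : ℕ) (hN : 1 ≤ N) (c : Fin (2 * k) → Bool)
    (hc : (Finset.univ.filter fun a => c a = true).card = k)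
    (ξ : PiTensorProduct ℂ fun _ : Fin (2 * k) => Fin N → ℂ)
    (hξ : ∀ g : Matrix (Fin N) (Fin N) ℂ,
      g ∈ Matrix.unitaryGroup (Fin N) ℂ → g.det = 1 →
      PiTensorProduct.map (fun a : Fin (2 * k) =>
        if c a then g.mulVecLin else (g.map (starRingEnd ℂ)).mulVecLin) ξ = ξ) :
    ∀ u : Matrix (Fin N) (Fin N) ℂ, u ∈ Matrix.unitaryGroup (Fin N) ℂ →
      PiTensorProduct.map (fun a : Fin (2 * k) =>
        if c a then u.mulVecLin else (u.map (starRingEnd ℂ)).mulVecLin) ξ = ξ := by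
  intro u hu
  obtain ⟨z, g, hz, hg, hdet, rfl⟩ := exists_eq_smul_special hN hu
  have hsmul (x : ℂ) (A : Matrix (Fin N) (Fin N) ℂ) :
      (x • A).mulVecLin = x • A.mulVecLin :=
    LinearMap.ext fun v => Matrix.smul_mulVec x A v
  have hlegs : (fun a : Fin (2 * k) => if c a then (z • g).mulVecLin
      else ((z • g).map (starRingEnd ℂ)).mulVecLin) =
      fun a => (if c a then z else starRingEnd ℂ z) •
        (if c a then g.mulVecLin else (g.map (starRingEnd ℂ)).mulVecLin) := by
    funext a
    split_ifs
    · exact hsmul z g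
    · rw [← hsmul]
      congr 1
      ext i j
      simp
  have hmap := (PiTensorProduct.mapMultilinear ℂ (fun _ : Fin (2 * k) => Fin N → ℂ)
    (fun _ => Fin N → ℂ)).map_smul_univ (fun a => if c a then z else starRingEnd ℂ z)
    (fun a => if c a then g.mulVecLin else (g.map (starRingEnd ℂ)).mulVecLin)
  rw [prod_balanced c hc hz, one_smul] at hmap
  simp only [PiTensorProduct.mapMultilinear_apply] at hmap
  rw [hlegs, hmap]
  exact hξ g hg hdet
end

section
/- Let N, k ∈ ℕ, let π be an equivalence relation (partition) on Fin k, and define ξ_π ∈ (ℂ^N)^{⊗k} as the sum, over all functions i : Fin k → Fin N that are constant on each block of π (i.e., a ∼_π b implies i(a) = i(b)), of the elementary tensors e_{i(0)} ⊗ ⋯ ⊗ e_{i(k−1)}. Let σ be a permutation of Fin N, let ρ : Fin N → ℂ, and let g be the monomial matrix with g_{ij} = ρ_j if i = σ(j) and g_{ij} = 0 otherwise. Then g^{⊗k} ξ_π = ξ_π if and only if for every function i : Fin k → Fin N constant on each block of π one has ρ_{i(0)} · ρ_{i(1)} ⋯ ρ_{i(k−1)} = 1. -/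
/-!
The tensors `e_i = e_{i(0)} ⊗ ⋯ ⊗ e_{i(k-1)}` form a basis of the tensor power, and `g^{⊗k}` acts on
it monomially: it sends `e_i` to `(∏ a, ρ (i a)) • e_{σ ∘ i}` (`map_monomial_tprod`). Since `σ` is
injective, `i ↦ σ ∘ i` permutes the multi-indices that are constant on the blocks of `π`, so
reindexing `ξ_π` by it and comparing coefficients at `e_{σ ∘ i}` gives the criterion.
-/

/-- A monomial matrix maps each basis tensor to a multiple of another basis tensor. -/
lemma map_monomial_tprod {N k : ℕ} (σ : Equiv.Perm (Fin N)) (ρ : Fin N → ℂ)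
    (i : Fin k → Fin N) :
    PiTensorProduct.map (fun _ : Fin k =>
        (Matrix.of fun i j => if i = σ j then ρ j else 0 : Matrix (Fin N) (Fin N) ℂ).mulVecLin)
      (PiTensorProduct.tprod ℂ fun a => (Pi.single (i a) 1 : Fin N → ℂ)) =
    (∏ a, ρ (i a)) •
      PiTensorProduct.tprod ℂ fun a => (Pi.single (σ (i a)) 1 : Fin N → ℂ) := by
  rw [PiTensorProduct.map_tprod, ← MultilinearMap.map_smul_univ]
  congr 1
  funext a
  ext j
  simp [Pi.single_apply]

/-- The tensors `e_{σ ∘ i}` are linearly independent: they are the tensor-power basis,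
reindexed along `i ↦ σ ∘ i`. -/
lemma linearIndependent_tprod_single {N k : ℕ} (σ : Equiv.Perm (Fin N)) :
    LinearIndependent ℂ fun i : Fin k → Fin N =>
      PiTensorProduct.tprod ℂ fun a => (Pi.single (σ (i a)) 1 : Fin N → ℂ) := by
  have h := (Basis.piTensorProduct fun _ : Fin k => Pi.basisFun ℂ (Fin N)).linearIndependent.comp
    (fun i : Fin k → Fin N => fun a => σ (i a))
    (fun i j hij => funext fun a => σ.injective (congrFun hij a))
  have hb : (fun i : Fin k → Fin N =>
        PiTensorProduct.tprod ℂ fun a => (Pi.single (σ (i a)) 1 : Fin N → ℂ)) =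
      (Basis.piTensorProduct fun _ : Fin k => Pi.basisFun ℂ (Fin N)) ∘
        (fun i : Fin k → Fin N => fun a => σ (i a)) := by
    funext i
    simp [Basis.piTensorProduct_apply]
  rw [hb]
  exact h

/-- The fixed-point criterion from the proof of Theorem 4.5: for a partition `π`
of `Fin k` and a monomial matrix `g = σ(ρ_1,…,ρ_N)`, the vector `ξ_π` is fixed by
`g^{⊗k}` iff `ρ_{i_1} ⋯ ρ_{i_k} = 1` for all multi-indices `i` with `δ_π(i) = 1`. -/
theorem stmt_9 (N k : ℕ) (π : Setoid (Fin k)) [DecidableRel π.r]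
    (σ : Equiv.Perm (Fin N)) (ρ : Fin N → ℂ) :
    let e : Fin N → (Fin N → ℂ) := fun i => Pi.single i 1
    let ξ : PiTensorProduct ℂ fun _ : Fin k => Fin N → ℂ :=
      ∑ i : Fin k → Fin N,
        if ∀ a b : Fin k, π.r a b → i a = i b then
          PiTensorProduct.tprod ℂ (fun a => e (i a)) else 0
    let g : Matrix (Fin N) (Fin N) ℂ :=
      Matrix.of fun i j => if i = σ j then ρ j else 0
    (PiTensorProduct.map (fun _ : Fin k => g.mulVecLin) ξ = ξ ↔
      ∀ i : Fin k → Fin N, (∀ a b : Fin k, π.r a b → i a = i b) →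
        ∏ a : Fin k, ρ (i a) = 1) := by
  intro e ξ g
  have hξ : ξ = ∑ i : Fin k → Fin N,
      (if ∀ a b : Fin k, π.r a b → i a = i b then (1 : ℂ) else 0) •
        PiTensorProduct.tprod ℂ fun a => (Pi.single (σ (i a)) 1 : Fin N → ℂ) := by
    simp only [ξ]
    rw [← (Equiv.arrowCongr (Equiv.refl (Fin k)) σ).sum_comp
      (fun i : Fin k → Fin N => if ∀ a b : Fin k, π.r a b → i a = i b then
          PiTensorProduct.tprod ℂ (fun a => e (i a)) else 0)]
    refine Finset.sum_congr rfl fun i _ => ?_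
    simp [e, ite_smul]
  have hgξ : PiTensorProduct.map (fun _ : Fin k => g.mulVecLin) ξ = ∑ i : Fin k → Fin N,
      (if ∀ a b : Fin k, π.r a b → i a = i b then ∏ a, ρ (i a) else 0) •
        PiTensorProduct.tprod ℂ fun a => (Pi.single (σ (i a)) 1 : Fin N → ℂ) := by
    rw [map_sum]
    refine Finset.sum_congr rfl fun i _ => ?_
    split_ifs
    · exact map_monomial_tprod σ ρ i
    · simp
  rw [hgξ, hξ]
  constructor
  · intro h i hi
    have := LinearIndependent.fintypeLinearCombination_injective (linearIndependent_tprod_single (k := k) σ)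
    have := congrFun (this (a₁ := fun i : Fin k → Fin N =>
        if ∀ a b : Fin k, π.r a b → i a = i b then ∏ a, ρ (i a) else 0)
      (a₂ := fun i => if ∀ a b : Fin k, π.r a b → i a = i b then 1 else 0)
      (by simpa only [Fintype.linearCombination_apply] using h)) i
    simpa only [if_pos hi] using this
  · intro h
    refine Finset.sum_congr rfl fun i _ => ?_
    split_ifs with hi
    · rw [h i hi]
    · rfl
end

section
/- Let N ≥ 1 and let R be an N×N complex matrix satisfying (R·Rᵗ)_{ij} = δ_{ij} − 1/N for all i, j. Let rev be the linear endomorphism of ℂ^N ⊗ ℂ^N ⊗ ℂ^N determined by rev(x ⊗ y ⊗ z) = z ⊗ y ⊗ x, and let T = (R ⊗ R ⊗ R) ∘ rev ∘ (Rᵗ ⊗ Rᵗ ⊗ Rᵗ). Then, with ξ' = (1/N)·Σ_m e_m, for all i, j, k: T(e_i ⊗ e_j ⊗ e_k) = e_k ⊗ e_j ⊗ e_i − (e_k ⊗ e_j ⊗ ξ' + e_k ⊗ ξ' ⊗ e_i + ξ' ⊗ e_j ⊗ e_i) + (e_k ⊗ ξ' ⊗ ξ' + ξ' ⊗ e_j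 ⊗ ξ' + ξ' ⊗ ξ' ⊗ e_i) − ξ' ⊗ ξ' ⊗ ξ'. -/
/-!
Each tensor factor only sees `R Rᵗ = 1 - J / N` (`J` the all-ones matrix), which sends `e_i` to
`e_i - ξ'`. Hence `T (e_i ⊗ e_j ⊗ e_k) = (e_k - ξ') ⊗ (e_j - ξ') ⊗ (e_i - ξ')`, and the eight-term
formula is the multilinear expansion of the right-hand side.
-/

open scoped TensorProduct

/-- Proposition 5.5: if `(R·Rᵗ)_{ij} = δ_{ij} - 1/N`, then the map
`T = (R ⊗ R ⊗ R) ∘ rev ∘ (Rᵗ ⊗ Rᵗ ⊗ Rᵗ)` is given on elementary tensors by the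
explicit 8-term formula involving `ξ' = (1/N) ξ`. -/
theorem stmt_13 (N : ℕ) (hN : 1 ≤ N) (R : Matrix (Fin N) (Fin N) ℂ)
    (hR : ∀ i j : Fin N,
      (R * R.transpose) i j = (if i = j then 1 else 0) - 1 / (N : ℂ))
    (rev : ((Fin N → ℂ) ⊗[ℂ] ((Fin N → ℂ) ⊗[ℂ] (Fin N → ℂ))) →ₗ[ℂ]
      ((Fin N → ℂ) ⊗[ℂ] ((Fin N → ℂ) ⊗[ℂ] (Fin N → ℂ))))
    (hrev : ∀ x y z : Fin N → ℂ,
      rev (x ⊗ₜ[ℂ] (y ⊗ₜ[ℂ] z)) = z ⊗ₜ[ℂ] (y ⊗ₜ[ℂ] x)) :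
    let e : Fin N → (Fin N → ℂ) := fun i => Pi.single i 1
    let ξ' : Fin N → ℂ := (1 / (N : ℂ)) • ∑ m : Fin N, e m
    let T := (TensorProduct.map R.mulVecLin
        (TensorProduct.map R.mulVecLin R.mulVecLin)) ∘ₗ rev ∘ₗ
      (TensorProduct.map R.transpose.mulVecLin
        (TensorProduct.map R.transpose.mulVecLin R.transpose.mulVecLin))
    ∀ i j k : Fin N,
      T (e i ⊗ₜ[ℂ] (e j ⊗ₜ[ℂ] e k)) =
        e k ⊗ₜ[ℂ] (e j ⊗ₜ[ℂ] e i)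
        - (e k ⊗ₜ[ℂ] (e j ⊗ₜ[ℂ] ξ') + e k ⊗ₜ[ℂ] (ξ' ⊗ₜ[ℂ] e i)
            + ξ' ⊗ₜ[ℂ] (e j ⊗ₜ[ℂ] e i))
        + (e k ⊗ₜ[ℂ] (ξ' ⊗ₜ[ℂ] ξ') + ξ' ⊗ₜ[ℂ] (e j ⊗ₜ[ℂ] ξ')
            + ξ' ⊗ₜ[ℂ] (ξ' ⊗ₜ[ℂ] e i))
        - ξ' ⊗ₜ[ℂ] (ξ' ⊗ₜ[ℂ] ξ') := by
  intro e ξ' T i j k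
  have key : ∀ i, R.mulVec (R.transpose.mulVec (e i)) = e i - ξ' := by
    intro i
    ext a
    rw [Matrix.mulVec_mulVec]
    simp [e, ξ', hR, Finset.sum_apply, Pi.single_apply]
  simp only [T, LinearMap.comp_apply, TensorProduct.map_tmul, hrev, Matrix.mulVecLin_apply, key,
    TensorProduct.sub_tmul, TensorProduct.tmul_sub]
  abel
end

section
/- Let G be a subgroup of the symmetric group of permutations of Fin 5 whose natural action on Fin 5 is transitive. Then the order of G belongs to {5, 10, 20, 60, 120}; moreover, if the order of G is 60 then G is the alternating group on Fin 5, and if the order of G is 120 then G is the full symmetric group on Fin 5. -/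
/-!
Orbit-stabilizer makes the order of a transitive subgroup `G` of `S₅` a multiple of `5`, and by
Lagrange it divides `120`, so it is one of `5, 10, 15, 20, 30, 40, 60, 120`.

If `3` divides the order, Cauchy's theorem gives an element of order `3`, which on five points can
only be a 3-cycle. A transitive action on a prime number of points is primitive, so Jordan's theorem
yields `A₅ ≤ G`; this rules out the orders `15` and `30`.

The order `40` means index `3`. The normal core of `G` then has index dividing `3! = 6`, so it is
nontrivial, hence contains `A₅`, whose order `60` exceeds `40`.

Orders `60` and `120` mean index `2` and `1`; the only subgroup of index `2` is `A₅`.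
-/

open Equiv Equiv.Perm MulAction

theorem natCard_perm_fin_five : Nat.card (Perm (Fin 5)) = 120 := by
  rw [Nat.card_perm, Nat.card_fin]; rfl

theorem natCard_alternatingGroup_fin_five : Nat.card (alternatingGroup (Fin 5)) = 60 := by
  have h := two_mul_nat_card_alternatingGroup (α := Fin 5)
  rw [natCard_perm_fin_five] at h
  lia

theorem alternatingGroup_le_of_three_dvd (G : Subgroup (Perm (Fin 5)))
    [IsPretransitive G (Fin 5)] (h3 : 3 ∣ Nat.card G) : alternatingGroup (Fin 5) ≤ G := by
  obtain ⟨g, hg⟩ := exists_prime_orderOf_dvd_card' 3 h3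
  have hg' : orderOf (g : Perm (Fin 5)) = 3 := by rw [Subgroup.orderOf_coe, hg]
  -- Two disjoint 3-cycles would need six points.
  have hc : (g : Perm (Fin 5)).IsCycle :=
    isCycle_of_prime_order' (hg' ▸ Nat.prime_three) (by rw [hg']; decide)
  have h3c : (g : Perm (Fin 5)).IsThreeCycle :=
    card_support_eq_three_iff.mp (hc.orderOf ▸ hg')
  have hp : IsPreprimitive G (Fin 5) :=
    IsPreprimitive.of_prime_card (by rw [Nat.card_fin]; exact Nat.prime_five)
  exact alternatingGroup_le_of_isPreprimitive_of_isThreeCycle_mem hp h3c g.2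

theorem index_ne_three (G : Subgroup (Perm (Fin 5))) : G.index ≠ 3 := by
  intro h
  -- The core is the kernel of the action on the three cosets of `G`.
  have hcore : G.normalCore.index ∣ 6 := by
    rw [Subgroup.normalCore_eq_ker, Subgroup.index_ker]
    have h6 : Nat.card (Perm (Perm (Fin 5) ⧸ G)) = 6 := by
      rw [Nat.card_perm, ← Subgroup.index_eq_card, h]; rfl
    rw [← h6]
    exact Subgroup.card_subgroup_dvd_card _
  have hnt : Nontrivial G.normalCore := by
    rw [Subgroup.nontrivial_iff_ne_bot]
    intro hb
    rw [hb, Subgroup.index_bot, natCard_perm_fin_five] at hcore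
    norm_num at hcore
  have hle : alternatingGroup (Fin 5) ≤ G :=
    (alternatingGroup_le_of_normal (by simp) hnt).trans G.normalCore_le
  have hdvd := Subgroup.index_dvd_of_le hle
  rw [alternatingGroup.index_eq_two, h] at hdvd
  norm_num at hdvd

/-- Proposition 7.7(1): a transitive subgroup of `S_5` has order `5`, `10`, `20`,
`60` or `120`; in the last two cases it is `A_5`, respectively `S_5`. -/
theorem stmt_15 (G : Subgroup (Equiv.Perm (Fin 5)))
    (hG : ∀ x y : Fin 5, ∃ g ∈ G, g x = y) :
    Nat.card G ∈ ({5, 10, 20, 60, 120} : Set ℕ) ∧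
    (Nat.card G = 60 → G = alternatingGroup (Fin 5)) ∧
    (Nat.card G = 120 → G = ⊤) := by
  have : IsPretransitive G (Fin 5) :=
    ⟨fun x y => let ⟨g, hg, h⟩ := hG x y; ⟨⟨g, hg⟩, h⟩⟩
  have hmul := G.card_mul_index
  rw [natCard_perm_fin_five] at hmul
  refine ⟨?_, fun h => ?_, fun h => ?_⟩
  · have h5 : 5 ∣ Nat.card G := by
      have h := (stabilizer G (0 : Fin 5)).index_dvd_card
      rwa [index_stabilizer_of_transitive, Nat.card_fin] at h
    have h3 : 3 ∣ Nat.card G → 60 ∣ Nat.card G := fun h =>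
      natCard_alternatingGroup_fin_five ▸
        Subgroup.card_dvd_of_le (alternatingGroup_le_of_three_dvd G h)
    have hi := index_ne_three G
    obtain ⟨d, hd⟩ := h5
    have hd24 : d * G.index = 24 := by rw [hd] at hmul; lia
    have hdle : d ≤ 24 := Nat.le_of_dvd (by norm_num) ⟨_, hd24.symm⟩
    rw [hd] at h3 ⊢
    simp only [Set.mem_insert_iff, Set.mem_singleton_iff]
    clear hmul hd
    interval_cases d <;> lia
  · exact eq_alternatingGroup_of_index_eq_two (by rw [h] at hmul; lia)
  · exact Subgroup.index_eq_one.mp (by rw [h] at hmul; lia)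
end
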